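/- Let t be an even positive integer, let M be a matroid, and let e_1, e_2, …, e_n be an even t-cyclic ordering of M. Let P = {e_{i+1}, e_{i+2}, …, e_{i+k}} be a set of k consecutive elements such that i+1 is odd (parity modulo n, which is even), |P| is even, |P| ≥ t−2, and |E(M) − P| ≥ t−2. Then r(P) = (|P| + t − 2)/2. -/

import Mathlib

open Set

namespace CyclicArr

variable {α : Type*}

/-- `C` is a circuit of the matroid `M`: a minimal dependent set. -/
def Cct (M : Matroid α) (C : Set α) : Prop := Minimal M.Dep C

/-- The set of `len` consecutive elements `{e_i, e_{i+1}, …, e_{i+len-1}}`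
in a cyclic ordering `e`, subscripts mod `n`. -/
def seg {n : ℕ} (e : ZMod n → α) (i : ℤ) (len : ℕ) : Set α :=
  (fun k : ℕ => e ((i + k : ℤ) : ZMod n)) '' Set.Iio len

/-- `e` is a cyclic ordering of (the ground set of) `M`. -/
def CyclicOrd {n : ℕ} (M : Matroid α) (e : ZMod n → α) : Prop :=
  Function.Injective e ∧ Set.range e = M.E

/-- `e` is a cyclic `(t-1, t)`-ordering of `M`: every `t-1` consecutive elements
are contained in a `t`-element circuit and a `t`-element cocircuit. -/
def CyclicPropOrd {n : ℕ} (M : Matroid α) (t : ℕ) (e : ZMod n → α) : Prop :=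
  CyclicOrd M e ∧
  ∀ i : ℤ, (∃ C, Cct M C ∧ C.ncard = t ∧ seg e i (t-1) ⊆ C) ∧
           (∃ C, Cct M✶ C ∧ C.ncard = t ∧ seg e i (t-1) ⊆ C)

/-- `M` has the cyclic `(t-1, t)`-property: it admits a cyclic `(t-1, t)`-ordering. -/
def HasCycProp (M : Matroid α) (t : ℕ) : Prop :=
  ∃ (n : ℕ) (e : ZMod n → α), CyclicPropOrd M t e

/-- `e` is an odd `t`-cyclic ordering of `M` (with `n ≥ t+1`): for all odd `i ∈ {1,…,n}`,
`{e_i, …, e_{i+t-1}}` is a `t`-element circuit and `{e_{i+1}, …, e_{i+t}}` is a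
`t`-element cocircuit. -/
def OddTCycOrd {n : ℕ} (M : Matroid α) (t : ℕ) (e : ZMod n → α) : Prop :=
  CyclicOrd M e ∧ t + 1 ≤ n ∧
  ∀ i : ℕ, Odd i → 1 ≤ i → i ≤ n →
    (Cct M (seg e (i : ℤ) t) ∧ (seg e (i : ℤ) t).ncard = t) ∧
    (Cct M✶ (seg e ((i : ℤ) + 1) t) ∧ (seg e ((i : ℤ) + 1) t).ncard = t)

/-- `e` is an even `t`-cyclic ordering of `M` (with `n ≥ t+1`): for all odd `i ∈ {1,…,n}`,
`{e_i, …, e_{i+t-1}}` is both a `t`-element circuit and a `t`-element cocircuit. -/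
def EvenTCycOrd {n : ℕ} (M : Matroid α) (t : ℕ) (e : ZMod n → α) : Prop :=
  CyclicOrd M e ∧ t + 1 ≤ n ∧
  ∀ i : ℕ, Odd i → 1 ≤ i → i ≤ n →
    Cct M (seg e (i : ℤ) t) ∧ Cct M✶ (seg e (i : ℤ) t) ∧ (seg e (i : ℤ) t).ncard = t

/-- `M` is `t`-cyclic: it admits an odd or even `t`-cyclic ordering. -/
def TCyclic (M : Matroid α) (t : ℕ) : Prop :=
  ∃ (n : ℕ) (e : ZMod n → α), OddTCycOrd M t e ∨ EvenTCycOrd M t e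

/-- The rank of a set `X` in a matroid `M`: the maximum cardinality of an
independent subset of `X` (for a finite matroid). -/
noncomputable def rkf (M : Matroid α) (X : Set α) : ℕ :=
  sSup {k | ∃ I, M.Indep I ∧ I ⊆ X ∧ I.ncard = k}

/-- The connectivity function `λ(X) = r(X) + r*(X) - |X|`, valued in `ℤ`. -/
noncomputable def lam (M : Matroid α) (X : Set α) : ℤ :=
  (rkf M X : ℤ) + (rkf M✶ X : ℤ) - (X.ncard : ℤ)

/-- The local connectivity `⊓(X, Y) = r(X) + r(Y) - r(X ∪ Y)`, valued in `ℤ`. -/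
noncomputable def pic (M : Matroid α) (X Y : Set α) : ℤ :=
  (rkf M X : ℤ) + (rkf M Y : ℤ) - (rkf M (X ∪ Y) : ℤ)

/-- `X` is exactly `k`-separating: `λ(X) = k - 1`. -/
noncomputable def ExactSep (M : Matroid α) (k : ℕ) (X : Set α) : Prop :=
  lam M X = (k : ℤ) - 1

/-- `(P_1, …, P_m)` is a concatenation of the cyclic ordering `e`, where `P i` is the
block of `l i` consecutive elements starting at position `a i`, and the blocks occur in
cyclic order and partition the ground set. -/
def IsConcat {n m : ℕ} (e : ZMod n → α) (P : ZMod m → Set α) (a l : ZMod m → ℕ) : Prop :=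
  (∀ i, 1 ≤ l i) ∧
  (∀ i, ((a (i + 1) : ZMod n)) = ((a i + l i : ℕ) : ZMod n)) ∧
  (∀ i, P i = seg e (a i : ℤ) (l i)) ∧
  Set.univ.PairwiseDisjoint P ∧
  (⋃ i, P i) = Set.range e

/-- `(P_1, …, P_m)` is a `k`-flower of `M`: a partition of the ground set into nonempty
sets, each exactly `k`-separating, with consecutive unions exactly `k`-separating. -/
noncomputable def IsFlower (M : Matroid α) (k : ℕ) {m : ℕ} (P : ZMod m → Set α) : Prop :=
  2 ≤ m ∧
  Set.univ.PairwiseDisjoint P ∧ (⋃ i, P i) = M.E ∧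
  (∀ i, (P i).Nonempty) ∧
  (∀ i, ExactSep M k (P i)) ∧
  (3 ≤ m → ∀ i, ExactSep M k (P i ∪ P (i + 1)))

/-- `I ⊆ ZMod m` is a set of consecutive members in the cyclic order. -/
def CycInterval {m : ℕ} (I : Set (ZMod m)) : Prop :=
  ∃ (a : ZMod m) (len : ℕ), 0 < len ∧ I = (fun k : ℕ => a + (k : ZMod m)) '' Set.Iio len

/-- A `k`-daisy: a `k`-flower in which the union of a proper nonempty collection of
petals is exactly `k`-separating precisely when the petals are consecutive. -/
noncomputable def IsDaisy (M : Matroid α) (k : ℕ) {m : ℕ} (P : ZMod m → Set α) : Prop :=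
  IsFlower M k P ∧
  ∀ I : Set (ZMod m), I.Nonempty → I ≠ Set.univ →
    (ExactSep M k (⋃ i ∈ I, P i) ↔ CycInterval I)

/-- A `k`-anemone: a `k`-flower in which the union of every proper nonempty collection
of petals is exactly `k`-separating. -/
noncomputable def IsAnemone (M : Matroid α) (k : ℕ) {m : ℕ} (P : ZMod m → Set α) : Prop :=
  IsFlower M k P ∧
  ∀ I : Set (ZMod m), I.Nonempty → I ≠ Set.univ → ExactSep M k (⋃ i ∈ I, P i)

/-!
Write `t = 2s + 2` and `n = 2q`. Orthogonality forces `n` to be even: `|E| ≥ 2t - 2`, so for odd `n`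
the circuit starting at `e_1` would meet the cocircuit ending at `e_1` in a single element.
Lengthening an even block that starts at an odd position and has at least `t - 2` elements by two
raises its rank by at most one, because the last element completes a circuit. Starting from a block
of `t - 2` elements, this gives `r(P) ≤ |P|/2 + s`. A block missing only `t - 2` elements is
spanning, since its complement is properly contained in a cocircuit; hence `r(M) ≤ q`. By duality
`r(M✶) ≤ q`, and the two ranks add up to `2q`, so `r(M) = q`. Lengthening `P` to a spanning block
then gives `r(P) ≥ |P|/2 + s`.
-/

section Rank

variable {M : Matroid α} {C D X : Set α} {x : α}

theorem cast_rkf (M : Matroid α) [M.RankFinite] (X : Set α) : (rkf M X : ℕ∞) = M.eRk X := by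
  obtain ⟨I, hI⟩ := M.exists_isBasis' X
  have hmax : IsGreatest {k | ∃ J, M.Indep J ∧ J ⊆ X ∧ J.ncard = k} I.ncard := by
    refine ⟨⟨I, hI.indep, hI.subset, rfl⟩, ?_⟩
    rintro _ ⟨J, hJ, hJX, rfl⟩
    have hle := hJ.encard_le_eRk_of_subset hJX
    rwa [← hI.encard_eq_eRk, ← hI.indep.finite.cast_ncard_eq, ← hJ.finite.cast_ncard_eq,
      Nat.cast_le] at hle
  rw [rkf, hmax.csSup_eq, hI.indep.finite.cast_ncard_eq, hI.encard_eq_eRk]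

theorem eRk_insert_eq_of_mem_closure (hx : x ∈ M.closure X) : M.eRk (insert x X) = M.eRk X := by
  rw [← M.eRk_closure_eq, Matroid.closure_insert_eq_of_mem_closure hx, M.eRk_closure_eq]

theorem mem_closure_of_isCircuit_subset_insert (hC : M.IsCircuit C) (hxC : x ∈ C)
    (hCX : C ⊆ insert x X) : x ∈ M.closure X :=
  M.closure_subset_closure (sdiff_singleton_subset_iff.2 hCX)
    (hC.mem_closure_sdiff_singleton_of_mem hxC)

theorem encard_add_encard_le_of_isCircuit_of_isCocircuit (hC : M.IsCircuit C)
    (hD : M.IsCocircuit D) : C.encard + D.encard ≤ M.E.encard + 2 := by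
  have hD' : M✶.IsCircuit D := hD
  calc C.encard + D.encard = (M.eRk C + 1) + (M✶.eRk D + 1) := by
        rw [hC.eRk_add_one_eq, hD'.eRk_add_one_eq]
    _ ≤ (M.eRank + 1) + (M✶.eRank + 1) := by
        gcongr <;> apply Matroid.eRk_le_eRank
    _ = M.E.encard + 2 := by
        rw [add_add_add_comm, M.eRank_add_eRank_dual, one_add_one_eq_two]

end Rank

section Seg

variable {n : ℕ} (e : ZMod n → α)

theorem seg_eq_image_Ico (a : ℤ) (len : ℕ) :
    seg e a len = (fun b : ℤ => e (b : ZMod n)) '' Ico a (a + len) := by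
  ext x
  constructor
  · rintro ⟨j, hj, rfl⟩
    exact ⟨a + j, ⟨by omega, by simpa using hj⟩, rfl⟩
  · rintro ⟨b, ⟨hab, hb⟩, rfl⟩
    refine ⟨(b - a).toNat, by simp only [mem_Iio]; omega, ?_⟩
    simp only [Int.toNat_of_nonneg (sub_nonneg.2 hab), add_sub_cancel]

theorem mem_seg {a b : ℤ} {len : ℕ} (hab : a ≤ b) (hb : b < a + len) :
    e (b : ZMod n) ∈ seg e a len := by
  rw [seg_eq_image_Ico]
  exact mem_image_of_mem _ ⟨hab, hb⟩

theorem seg_congr {a b : ℤ} (h : (a : ZMod n) = b) (len : ℕ) : seg e a len = seg e b len := by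
  simp only [seg, Int.cast_add, h]

theorem seg_subset_seg {a b : ℤ} {len len' : ℕ} (hba : b ≤ a) (h : a + len ≤ b + len') :
    seg e a len ⊆ seg e b len' := by
  simp only [seg_eq_image_Ico]
  exact image_mono (Ico_subset_Ico hba h)

theorem seg_add (a : ℤ) (k l : ℕ) : seg e a (k + l) = seg e a k ∪ seg e (a + k) l := by
  simp only [seg_eq_image_Ico, ← image_union, Nat.cast_add, ← add_assoc]
  rw [Ico_union_Ico_eq_Ico (by omega) (by omega)]

theorem seg_succ (a : ℤ) (len : ℕ) :
    seg e a (len + 1) = insert (e ((a + len : ℤ) : ZMod n)) (seg e a len) := by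
  rw [seg_add, union_comm]
  simp [seg]

theorem range_eq_seg [NeZero n] (a : ℤ) : range e = seg e a n := by
  refine Subset.antisymm ?_ (image_subset_iff.2 fun j _ => mem_range_self _)
  rintro _ ⟨z, rfl⟩
  obtain ⟨c, rfl⟩ := ZMod.intCast_surjective z
  have hn : (0 : ℤ) < n := by exact_mod_cast NeZero.pos n
  have hc : ((a + (c - a) % n : ℤ) : ZMod n) = c := by simp
  rw [← hc]
  exact mem_seg e (by linarith [Int.emod_nonneg (c - a) hn.ne'])
    (by linarith [Int.emod_lt_of_pos (c - a) hn])

theorem range_sdiff_seg_subset [NeZero n] (a : ℤ) {k l : ℕ} (hkl : k + l = n) :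
    range e \ seg e a k ⊆ seg e (a + k) l := by
  rw [sdiff_subset_iff, ← seg_add, hkl, ← range_eq_seg]

theorem seg_finite (a : ℤ) (len : ℕ) : (seg e a len).Finite :=
  (finite_Iio len).image _

theorem ncard_seg_le (a : ℤ) (len : ℕ) : (seg e a len).ncard ≤ len :=
  (ncard_image_le (finite_Iio len)).trans_eq (ncard_Iio_nat len)

theorem encard_seg_le (a : ℤ) (len : ℕ) : (seg e a len).encard ≤ len := by
  rw [← (seg_finite e a len).cast_ncard_eq]
  exact_mod_cast ncard_seg_le e a len

variable {e} in
theorem seg_inter_seg_eq_singleton (he : e.Injective) (a : ℤ) {k l : ℕ} (hk : 0 < k) (hl : 0 < l)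
    (hkl : k + l ≤ n + 1) : seg e a k ∩ seg e (a + 1 - l) l = {e (a : ZMod n)} := by
  refine eq_singleton_iff_unique_mem.2
    ⟨⟨mem_seg e le_rfl (by omega), mem_seg e (by omega) (by omega)⟩, ?_⟩
  rintro x ⟨hxk, hxl⟩
  rw [seg_eq_image_Ico] at hxk hxl
  obtain ⟨b, ⟨hab, hb⟩, rfl⟩ := hxk
  obtain ⟨c, ⟨hac, hc⟩, hcb⟩ := hxl
  have hdvd : (n : ℤ) ∣ b - c := (ZMod.intCast_eq_intCast_iff_dvd_sub _ _ _).1 (he hcb)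
  have hbc : b - c = 0 := Int.eq_zero_of_dvd_of_nonneg_of_lt (by omega) (by omega) hdvd
  rw [show b = a by omega]

end Seg

section CyclicOrd

variable {n : ℕ} {M : Matroid α} {e : ZMod n → α}

theorem CyclicOrd.encard_ground [NeZero n] (he : CyclicOrd M e) : M.E.encard = n := by
  rw [← he.2, ← image_univ, he.1.encard_image, encard_univ, ENat.card_eq_coe_natCard,
    Nat.card_zmod]

theorem CyclicOrd.finite [NeZero n] (he : CyclicOrd M e) : M.Finite :=
  ⟨finite_of_encard_eq_coe he.encard_ground⟩

theorem CyclicOrd.dual (he : CyclicOrd M e) : CyclicOrd M✶ e := he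

end CyclicOrd

/-- Every block of `t` consecutive elements that starts at an odd position is a `t`-element circuit
of `M`. Positions are arbitrary integers, so that blocks may wrap around; the notion is meant for
even `n`, where the parity of a position is well defined. -/
def OddSegsCircuit {n : ℕ} (M : Matroid α) (t : ℕ) (e : ZMod n → α) : Prop :=
  ∀ a : ℤ, Odd a → M.IsCircuit (seg e a t) ∧ (seg e a t).ncard = t

section OddSegsCircuit

variable {n s : ℕ} {M : Matroid α} {e : ZMod n → α} {a : ℤ}

theorem pos_of_isCircuit_seg {t : ℕ} (hC : M.IsCircuit (seg e a t)) : 0 < t := by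
  by_contra! ht
  simpa [seg, Nat.le_zero.1 ht] using hC.nonempty

theorem eRk_seg_succ_of_isCircuit {b : ℤ} {t len : ℕ} (hC : M.IsCircuit (seg e b t)) (hab : a ≤ b)
    (hb : b + t = a + len + 1) : M.eRk (seg e a (len + 1)) = M.eRk (seg e a len) := by
  have ht := pos_of_isCircuit_seg hC
  rw [seg_succ]
  refine eRk_insert_eq_of_mem_closure (mem_closure_of_isCircuit_subset_insert hC ?_ ?_)
  · exact mem_seg e (by omega) (by omega)
  · rw [← seg_succ]
    exact seg_subset_seg e hab (by omega)

theorem OddSegsCircuit.eRk_seg_add_le (hC : OddSegsCircuit M (2 * s + 2) e) (ha : Odd a) {p : ℕ}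
    (hp : s ≤ p) (m : ℕ) : M.eRk (seg e a (2 * (p + m))) ≤ M.eRk (seg e a (2 * p)) + m := by
  induction m with
  | zero => simp
  | succ m ih =>
    have hodd : Odd (a + 2 * (p + m - s : ℤ)) := ha.add_even (even_two_mul _)
    calc M.eRk (seg e a (2 * (p + m) + 1 + 1))
        = M.eRk (seg e a (2 * (p + m) + 1)) :=
          eRk_seg_succ_of_isCircuit (hC _ hodd).1 (by omega) (by push_cast; ring)
      _ ≤ M.eRk (seg e a (2 * (p + m))) + 1 := by
          rw [seg_succ]
          exact M.eRk_insert_le_add_one _ _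
      _ ≤ M.eRk (seg e a (2 * p)) + m + 1 := by gcongr
      _ = M.eRk (seg e a (2 * p)) + (m + 1 : ℕ) := by rw [Nat.cast_add_one, add_assoc]

theorem OddSegsCircuit.eRk_seg_le (hC : OddSegsCircuit M (2 * s + 2) e) (ha : Odd a) {p : ℕ}
    (hp : s ≤ p) : M.eRk (seg e a (2 * p)) ≤ (s + p : ℕ) := by
  obtain ⟨m, rfl⟩ := Nat.exists_eq_add_of_le hp
  calc M.eRk (seg e a (2 * (s + m)))
      ≤ M.eRk (seg e a (2 * s)) + m := hC.eRk_seg_add_le ha le_rfl m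
    _ ≤ (2 * s : ℕ) + m := by
        gcongr
        exact (M.eRk_le_encard _).trans (encard_seg_le e a _)
    _ = (s + (s + m) : ℕ) := by rw [← Nat.cast_add, ← add_assoc, two_mul]

theorem OddSegsCircuit.indep_seg {t len : ℕ} (hC : OddSegsCircuit M t e) (ha : Odd a)
    (hlen : len < t) : M.Indep (seg e a len) := by
  obtain ⟨hcircuit, hcard⟩ := hC a ha
  refine hcircuit.ssubset_indep ((seg_subset_seg e le_rfl (by omega)).ssubset_of_ne fun heq => ?_)
  have hle := ncard_seg_le e a len
  rw [heq, hcard] at hle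
  omega

theorem OddSegsCircuit.spanning_seg [NeZero n] {t k l : ℕ} (he : CyclicOrd M e)
    (hC : OddSegsCircuit M✶ t e) (ha : Odd (a + k)) (hl : l < t) (hkl : k + l = n) :
    M.Spanning (seg e a k) := by
  have hground : seg e a k ⊆ M.E := by
    rw [← he.2, range_eq_seg e a]
    exact seg_subset_seg e le_rfl (by omega)
  rw [Matroid.spanning_iff_compl_coindep hground, ← he.2]
  exact (hC.indep_seg ha hl).subset (range_sdiff_seg_subset e a hkl)

theorem OddSegsCircuit.eRank_le [NeZero n] (he : CyclicOrd M e)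
    (hC : OddSegsCircuit M (2 * s + 2) e) (hC' : OddSegsCircuit M✶ (2 * s + 2) e) {q : ℕ}
    (hn : n = 2 * q) (hq : 2 * s ≤ q) : M.eRank ≤ q := by
  have hspan : M.Spanning (seg e 1 (2 * (q - s))) :=
    hC'.spanning_seg (l := 2 * s) he (odd_one.add_even (by simp)) (by omega) (by omega)
  rw [← hspan.eRk_eq]
  exact (hC.eRk_seg_le odd_one (by omega)).trans_eq (by rw [show s + (q - s) = q by omega])

theorem OddSegsCircuit.le_eRank [NeZero n] (he : CyclicOrd M e)
    (hC : OddSegsCircuit M (2 * s + 2) e) (hC' : OddSegsCircuit M✶ (2 * s + 2) e) {q : ℕ}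
    (hn : n = 2 * q) (hq : 2 * s ≤ q) : (q : ℕ∞) ≤ M.eRank := by
  have hdual : M✶.eRank ≤ q :=
    hC'.eRank_le he.dual (by rwa [Matroid.dual_dual]) hn hq
  have hsum : (q : ℕ∞) + q ≤ M.eRank + q := calc
    (q : ℕ∞) + q = M.E.encard := by rw [he.encard_ground, hn, two_mul, Nat.cast_add]
    _ = M.eRank + M✶.eRank := M.eRank_add_eRank_dual.symm
    _ ≤ M.eRank + q := by gcongr
  exact (ENat.add_le_add_iff_right (ENat.natCast_ne_top q)).1 hsum

theorem OddSegsCircuit.eRk_seg_eq [NeZero n] (he : CyclicOrd M e)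
    (hC : OddSegsCircuit M (2 * s + 2) e) (hC' : OddSegsCircuit M✶ (2 * s + 2) e) (ha : Odd a)
    {p q : ℕ} (hn : n = 2 * q) (hp : s ≤ p) (hpq : p + s ≤ q) :
    M.eRk (seg e a (2 * p)) = (s + p : ℕ) := by
  refine (hC.eRk_seg_le ha hp).antisymm ?_
  obtain ⟨m, rfl⟩ := Nat.exists_eq_add_of_le hpq
  have hspan : M.Spanning (seg e a (2 * (p + m))) :=
    hC'.spanning_seg (l := 2 * s) he (ha.add_even (by simp)) (by omega) (by omega)
  have hsum : ((s + p : ℕ) : ℕ∞) + m ≤ M.eRk (seg e a (2 * p)) + m := calc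
    ((s + p : ℕ) : ℕ∞) + m = (p + s + m : ℕ) := by rw [← Nat.cast_add, add_comm s p]
    _ ≤ M.eRank := hC.le_eRank he hC' hn (by omega)
    _ = M.eRk (seg e a (2 * (p + m))) := hspan.eRk_eq.symm
    _ ≤ M.eRk (seg e a (2 * p)) + m := hC.eRk_seg_add_le ha hp m
  exact (ENat.add_le_add_iff_right (ENat.natCast_ne_top m)).1 hsum

end OddSegsCircuit

section EvenTCycOrd

variable {n t : ℕ} {M : Matroid α} {e : ZMod n → α}

theorem EvenTCycOrd.dual (he : EvenTCycOrd M t e) : EvenTCycOrd M✶ t e := by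
  refine ⟨he.1.dual, he.2.1, fun i hi hi1 hin => ?_⟩
  obtain ⟨hC, hC', hcard⟩ := he.2.2 i hi hi1 hin
  exact ⟨hC', by rwa [M.dual_dual], hcard⟩

theorem EvenTCycOrd.two_mul_le_add_two (he : EvenTCycOrd M t e) : 2 * t ≤ n + 2 := by
  obtain ⟨hord, hn, hseg⟩ := he
  have : NeZero n := ⟨by omega⟩
  obtain ⟨hC, hC', hcard⟩ := hseg 1 odd_one le_rfl (by omega)
  have hle := encard_add_encard_le_of_isCircuit_of_isCocircuit hC hC'
  rw [hord.encard_ground, ← (seg_finite e _ t).cast_ncard_eq, hcard] at hle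
  rw [two_mul]
  exact_mod_cast hle

theorem EvenTCycOrd.even_card (he : EvenTCycOrd M t e) (ht : Even t) : Even n := by
  have hlarge := he.two_mul_le_add_two
  obtain ⟨⟨hinj, -⟩, hn, hseg⟩ := he
  by_contra hodd
  obtain ⟨q, hq⟩ := Nat.not_even_iff_odd.1 hodd
  obtain ⟨s, hs⟩ := ht
  obtain ⟨hC, -, -⟩ := hseg 1 odd_one le_rfl (by omega)
  have htpos : 0 < t := pos_of_isCircuit_seg hC
  obtain ⟨-, hC', -⟩ :=
    hseg (2 * (q - s + 1) + 1) ⟨q - s + 1, rfl⟩ (by omega) (by omega)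
  have hstart : ((2 * (q - s + 1) + 1 : ℕ) : ℤ) = (1 + 1 - t) + n := by omega
  have hwrap : seg e (2 * (q - s + 1) + 1 : ℕ) t = seg e (1 + 1 - t) t :=
    seg_congr e (by rw [hstart]; simp) t
  rw [Nat.cast_one] at hC
  rw [hwrap] at hC'
  exact Matroid.IsCircuit.inter_isCocircuit_ne_singleton hC hC'
    (seg_inter_seg_eq_singleton hinj 1 htpos htpos (by omega))

theorem EvenTCycOrd.oddSegsCircuit (he : EvenTCycOrd M t e) (hn : Even n) :
    OddSegsCircuit M t e := by
  intro a ha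
  have hnpos : (0 : ℤ) < n := by have := he.2.1; omega
  have hnonneg := Int.emod_nonneg a hnpos.ne'
  have hlt := Int.emod_lt_of_pos a hnpos
  obtain ⟨j, hj⟩ := Int.eq_ofNat_of_zero_le hnonneg
  have hjodd : Odd j := by
    have hmod : Odd (a % n) := by
      rw [Int.emod_def]
      exact ha.sub_even (((Int.even_coe_nat n).2 hn).mul_right _)
    rwa [hj, Int.odd_coe_nat] at hmod
  obtain ⟨hC, -, hcard⟩ := he.2.2 j hjodd hjodd.pos (by omega)
  rw [← seg_congr e (a := j) (b := a) (by rw [← hj]; simp)]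
  exact ⟨hC, hcard⟩

end EvenTCycOrd

/-- Let `t` be an even positive integer and `e` an even `t`-cyclic
ordering of `M`. If `P = {e_{i+1},…,e_{i+k}}` with `i+1` odd, `|P|` even, `|P| ≥ t-2` and
`|E(M) - P| ≥ t-2`, then `r(P) = (|P| + t - 2)/2`. -/
theorem statement_15 (M : Matroid α) (t n : ℕ) (ht : 1 ≤ t) (hteven : Even t)
    (e : ZMod n → α) (he : EvenTCycOrd M t e) (i k : ℕ) (hk : k ≤ n)
    (hstart : Odd (i + 1)) (hkeven : Even k) (hsize : t - 2 ≤ k)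
    (P : Set α) (hP : P = seg e ((i : ℤ) + 1) k)
    (hcosize : t - 2 ≤ (M.E \ P).ncard) :
    2 * rkf M P + 2 = k + t := by
  have hord : CyclicOrd M e := he.1
  have : NeZero n := ⟨by have := he.2.1; omega⟩
  have : M.Finite := hord.finite
  have hneven : Even n := he.even_card hteven
  have hC : OddSegsCircuit M t e := he.oddSegsCircuit hneven
  have hC' : OddSegsCircuit M✶ t e := he.dual.oddSegsCircuit hneven
  have hroom : t - 2 ≤ n - k := by
    rw [← hord.2, hP] at hcosize
    have hcompl := range_sdiff_seg_subset e (i + 1) (show k + (n - k) = n by omega)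
    exact hcosize.trans <| (ncard_le_ncard hcompl (seg_finite e _ _)).trans (ncard_seg_le e _ _)
  obtain ⟨s, rfl⟩ : ∃ s, t = 2 * s + 2 := ⟨t / 2 - 1, by have := hteven.two_dvd; omega⟩
  obtain ⟨p, rfl⟩ := hkeven.two_dvd
  obtain ⟨q, hq⟩ := hneven.two_dvd
  have hrank : M.eRk P = (s + p : ℕ) := by
    rw [hP]
    exact hC.eRk_seg_eq hord hC' (by exact_mod_cast hstart) hq (by omega) (by omega)
  rw [← cast_rkf, Nat.cast_inj] at hrank
  omega

end CyclicArr
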